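/- If a Banach space X has an FDD (E_i) satisfying subsequential T_{A,c}-upper estimates for some regular family A of finite subsets of ℕ and some 0 < c < 1, then (E_i) is shrinking. -/

import Mathlib

open Filter Topology

/-- A finite dimensional decomposition (FDD) of a Banach space `X`, given by its
sequence of coordinate projections. -/
structure FDDOn (X : Type*) [NormedAddCommGroup X] [NormedSpace ℝ X] where
  P : ℕ → X →L[ℝ] X
  finDim : ∀ n, FiniteDimensional ℝ (LinearMap.range (P n : X →ₗ[ℝ] X))
  idem : ∀ n x, P n (P n x) = P n x
  orth : ∀ m n, m ≠ n → ∀ x, P m (P n x) = 0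
  total : ∀ x : X, Tendsto (fun N => ∑ i ∈ Finset.range N, P i x) atTop (𝓝 x)

namespace FDDOn

variable {X : Type*} [NormedAddCommGroup X] [NormedSpace ℝ X]

/-- The interval projection onto `⊕_{a ≤ i < b} E_i`. -/
noncomputable def PI (F : FDDOn X) (a b : ℕ) : X →L[ℝ] X :=
  ∑ i ∈ Finset.Ico a b, F.P i

/-- Support of a vector with respect to the FDD. -/
def suppIn (F : FDDOn X) (x : X) : Set ℕ := {n | F.P n x ≠ 0}

/-- `x` is finitely supported with respect to the FDD, with support contained in
`[a, b]` and both endpoints active. -/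
def SuppExact (F : FDDOn X) (x : X) (a b : ℕ) : Prop :=
  a ≤ b ∧ (F.suppIn x ⊆ Set.Icc a b) ∧ a ∈ F.suppIn x ∧ b ∈ F.suppIn x

/-- `z` is a block sequence of the FDD. -/
def IsBlockSeq (F : FDDOn X) (z : ℕ → X) (a b : ℕ → ℕ) : Prop :=
  (∀ n, F.SuppExact (z n) (a n) (b n)) ∧ ∀ n, b n < a (n + 1)

/-- The FDD is shrinking: every normalized block sequence is weakly null. -/
def Shrinking (F : FDDOn X) : Prop :=
  ∀ (z : ℕ → X) (a b : ℕ → ℕ), F.IsBlockSeq z a b → (∀ n, ‖z n‖ = 1) →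
    ∀ f : X →L[ℝ] ℝ, Tendsto (fun n => f (z n)) atTop (𝓝 0)

end FDDOn

/-- A regular family of finite subsets of `ℕ`: contains all singletons, hereditary,
spreading, and compact (equivalently, containing no infinite strictly increasing
chain). -/
def IsRegularFamily (𝒜 : Set (Finset ℕ)) : Prop :=
  (∀ n : ℕ, ({n} : Finset ℕ) ∈ 𝒜) ∧
  (∀ s ∈ 𝒜, ∀ t : Finset ℕ, t ⊆ s → t ∈ 𝒜) ∧
  (∀ s ∈ 𝒜, ∀ g : ℕ → ℕ, (∀ a ∈ s, a ≤ g a) → StrictMonoOn g (s : Set ℕ) →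
    s.image g ∈ 𝒜) ∧
  ¬ ∃ f : ℕ → Finset ℕ, (∀ i, f i ∈ 𝒜) ∧ ∀ i, f i ⊂ f (i + 1)

/-- An `𝒜`-admissible finite sequence of successive finite sets
`A_0 < A_1 < ⋯ < A_{len-1}` with `(min A_i)_i ∈ 𝒜`. -/
structure AdmissibleSets (𝒜 : Set (Finset ℕ)) where
  len : ℕ
  A : ℕ → Finset ℕ
  nonemp : ∀ i < len, (A i).Nonempty
  ordered : ∀ i j : ℕ, i < j → j < len → ∀ a ∈ A i, ∀ b ∈ A j, a < b
  mins : ∃ m : ℕ → ℕ, (∀ i < len, m i ∈ A i ∧ ∀ a ∈ A i, m i ≤ a) ∧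
    (Finset.range len).image m ∈ 𝒜

/-- Iterates of the implicit Tsirelson norm on finitely supported sequences. -/
noncomputable def tsAux (𝒜 : Set (Finset ℕ)) (c : ℝ) : ℕ → (ℕ →₀ ℝ) → ℝ
  | 0 => fun x => ⨆ i, |x i|
  | (k + 1) => fun x =>
      max (⨆ i, |x i|)
        (⨆ p : AdmissibleSets 𝒜,
          c * ∑ i ∈ Finset.range p.len, tsAux 𝒜 c k (Finsupp.filter (· ∈ p.A i) x))

/-- The Tsirelson norm `‖·‖_{𝒜,c}` on `c₀₀`: the implicitly defined norm of the
Tsirelson space `T_{𝒜,c}`. -/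
noncomputable def tsirelsonNorm (𝒜 : Set (Finset ℕ)) (c : ℝ) (x : ℕ →₀ ℝ) : ℝ :=
  ⨆ k, tsAux 𝒜 c k x

/-- The FDD `F` satisfies subsequential `C`-`T_{𝒜,c}`-upper estimates: every normalized
block sequence `(z_n)` with minimal supports `(m_n)` is `C`-dominated by the unit
vectors `(t_{m_n})` of `T_{𝒜,c}`. -/
def SubseqTsirelsonUpperEst {X : Type*} [NormedAddCommGroup X] [NormedSpace ℝ X]
    (F : FDDOn X) (𝒜 : Set (Finset ℕ)) (c C : ℝ) : Prop :=
  ∀ (z : ℕ → X) (a b : ℕ → ℕ), F.IsBlockSeq z a b → (∀ n, ‖z n‖ = 1) →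
    ∀ (co : ℕ → ℝ) (N : ℕ),
      ‖∑ n ∈ Finset.range N, co n • z n‖ ≤
        C * tsirelsonNorm 𝒜 c (∑ n ∈ Finset.range N, Finsupp.single (a n) (co n))

section Ptak

/-- Spreading, stated for two increasing enumerations. -/
lemma IsRegularFamily.image_mem_of_le {𝒜 : Set (Finset ℕ)} (h : IsRegularFamily 𝒜)
    {G : Finset ℕ} {α β : ℕ → ℕ} (hα : StrictMonoOn α (G : Set ℕ))
    (hβ : StrictMonoOn β (G : Set ℕ)) (hle : ∀ i ∈ G, α i ≤ β i) (hG : G.image α ∈ 𝒜) :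
    G.image β ∈ 𝒜 := by
  classical
  have hinv : ∀ i ∈ G, Function.invFunOn α (G : Set ℕ) (α i) = i := fun i hi =>
    hα.injOn.leftInvOn_invFunOn (by simpa using hi)
  have key := h.2.2.1 _ hG (fun a => β (Function.invFunOn α (G : Set ℕ) a)) ?_ ?_
  · rw [Finset.image_image] at key
    convert key using 1
    refine Finset.image_congr fun i hi => ?_
    simp [hinv i (by simpa using hi)]
  · intro a ha
    obtain ⟨i, hi, rfl⟩ := Finset.mem_image.1 ha
    rw [hinv i hi]
    exact hle i hi
  · intro a ha a' ha' haa'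
    obtain ⟨i, hi, rfl⟩ := Finset.mem_image.1 (Finset.mem_coe.1 ha)
    obtain ⟨i', hi', rfl⟩ := Finset.mem_image.1 (Finset.mem_coe.1 ha')
    simp only [hinv i hi, hinv i' hi']
    exact hβ hi hi' ((hα.lt_iff_lt hi hi').1 haa')

/-- A strict-superset induction principle on a regular family. -/
lemma IsRegularFamily.induction {𝒜 : Set (Finset ℕ)} (h : IsRegularFamily 𝒜)
    {p : Finset ℕ → Prop} (hp : ∀ F, (∀ F' ∈ 𝒜, F ⊂ F' → p F') → p F) (F : Finset ℕ) : p F := by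
  have hwf : WellFounded fun s t : 𝒜 => (t : Finset ℕ) ⊂ s := by
    rw [wellFounded_iff_isEmpty_descending_chain]
    refine ⟨fun f => h.2.2.2 ⟨fun i => (f.1 i : Finset ℕ), fun i => (f.1 i).2, fun i => f.2 i⟩⟩
  have hmem : ∀ s : 𝒜, p s := fun s =>
    hwf.induction (C := fun s : 𝒜 => p s) s fun s ih => hp s fun F' hF' hs => ih ⟨F', hF'⟩ hs
  exact hp F fun F' hF' _ => hmem ⟨F', hF'⟩

/-- A form of Pták's theorem relative to an initial piece `F`: there are convex combinations
with small mass on every `G` such that `F ∪ u(G)` belongs to the family. -/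
lemma IsRegularFamily.exists_small_mass_aux {𝒜 : Set (Finset ℕ)} (h : IsRegularFamily 𝒜)
    {u : ℕ → ℕ} (hu : StrictMono u) (F : Finset ℕ) :
    ∀ ε > (0 : ℝ), ∀ n : ℕ, ∃ b : ℕ →₀ ℝ, (∀ i, 0 ≤ b i) ∧ (∀ i < n, b i = 0) ∧
      ∑ i ∈ b.support, b i = 1 ∧
      ∀ G : Finset ℕ, (∀ i ∈ G, n ≤ i) → F ∪ G.image u ∈ 𝒜 → ∑ i ∈ G, b i ≤ ε := by
  classical
  induction F using h.induction with
  | hp F ih =>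
  have ih' : ∀ L : ℕ, (∀ a ∈ F, a < u L) → ∀ ε > (0 : ℝ), ∃ b : ℕ →₀ ℝ, (∀ i, 0 ≤ b i) ∧
      (∀ i < L + 1, b i = 0) ∧ ∑ i ∈ b.support, b i = 1 ∧
      ∀ G : Finset ℕ, (∀ i ∈ G, L + 1 ≤ i) → insert (u L) F ∪ G.image u ∈ 𝒜 →
        ∑ i ∈ G, b i ≤ ε := by
    intro L hL ε hε
    by_cases hm : insert (u L) F ∈ 𝒜
    · exact ih _ hm (Finset.ssubset_insert fun hF => lt_irrefl _ (hL _ hF)) ε hε (L + 1)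
    · refine ⟨Finsupp.single (L + 1) 1, fun i => ?_, fun i hi => ?_, ?_, fun G _ hG => ?_⟩
      · rw [Finsupp.single_apply]; split_ifs <;> norm_num
      · rw [Finsupp.single_apply, if_neg (by omega)]
      · simp [Finsupp.support_single]
      · exact absurd (h.2.1 _ hG _ Finset.subset_union_left) hm
  intro ε hε n₀
  obtain ⟨n, hn₀, hFn⟩ : ∃ n, n₀ ≤ n ∧ ∀ a ∈ F, a < u n := by
    refine ⟨n₀ + F.sup id + 1, by omega, fun a ha => ?_⟩
    have h1 : a ≤ F.sup id := Finset.le_sup (f := id) ha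
    have h2 := hu.id_le (n₀ + F.sup id + 1)
    simp only [id] at h2
    omega
  have step : ∀ k : ℕ, ∃ b : ℕ →₀ ℝ, (∀ i, 0 ≤ b i) ∧ (∀ i < n, b i = 0) ∧
      ∑ i ∈ b.support, b i = k ∧
      ∀ G : Finset ℕ, (∀ i ∈ G, n ≤ i) → F ∪ G.image u ∈ 𝒜 →
        ∑ i ∈ G, b i ≤ 1 + k * (ε / 2) := by
    intro k
    induction k with
    | zero => exact ⟨0, by simp, by simp, by simp, by simp⟩
    | succ k ihk =>
      obtain ⟨b, hb0, hbn, hbs, hbG⟩ := ihk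
      set L := max n (b.support.sup id)
      have hnL : n ≤ L := le_max_left _ _
      have hbL : ∀ i, L < i → b i = 0 := by
        intro i hi
        by_contra hne
        have : i ≤ b.support.sup id :=
          Finset.le_sup (f := id) (Finsupp.mem_support_iff.2 hne)
        have h3 : b.support.sup id ≤ L := le_max_right _ _
        omega
      obtain ⟨d, hd0, hdn, hds, hdG⟩ :=
        ih' L (fun a ha => (hFn a ha).trans_le (hu.monotone hnL)) (ε / 2) (by positivity)
      have hsum : ∀ f : ℕ →₀ ℝ, ∑ i ∈ f.support, f i = f.sum fun _ a => a := fun f => rfl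
      have hmass : ∀ G : Finset ℕ, ∑ i ∈ G, d i ≤ 1 := by
        intro G
        rw [← hds]
        calc ∑ i ∈ G, d i ≤ ∑ i ∈ G ∪ d.support, d i :=
              Finset.sum_le_sum_of_subset_of_nonneg Finset.subset_union_left fun i _ _ => hd0 i
          _ = ∑ i ∈ d.support, d i := by
              refine (Finset.sum_subset Finset.subset_union_right fun i _ hi => ?_).symm
              simpa using hi
      refine ⟨b + d, fun i => add_nonneg (hb0 i) (hd0 i), fun i hi => ?_, ?_, fun G hGn hG => ?_⟩
      · rw [Finsupp.add_apply, hbn i hi, hdn i (by omega), add_zero]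
      · rw [hsum, Finsupp.sum_add_index' (fun _ => rfl) (fun _ _ _ => rfl), ← hsum, ← hsum, hbs,
          hds]
        push_cast; ring
      · simp only [Finsupp.add_apply, Finset.sum_add_distrib]
        push_cast
        by_cases hex : ∃ i₀ ∈ G, i₀ ≤ L
        · obtain ⟨i₀, hi₀, hi₀L⟩ := hex
          have hG' : ∑ i ∈ G, d i = ∑ i ∈ G.filter (L < ·), d i := by
            rw [Finset.sum_filter]
            refine Finset.sum_congr rfl fun i _ => ?_
            split_ifs with hi
            · rfl
            · exact hdn i (by omega)
          have hmem : insert (u L) F ∪ (G.filter (L < ·)).image u ∈ 𝒜 := by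
            have h1 : insert (u i₀) F ∪ (G.filter (L < ·)).image u ∈ 𝒜 := by
              refine h.2.1 _ hG _ fun a ha => ?_
              simp only [Finset.mem_union, Finset.mem_insert, Finset.mem_image,
                Finset.mem_filter] at ha ⊢
              rcases ha with (rfl | ha) | ⟨i, ⟨hi, _⟩, rfl⟩
              · exact Or.inr ⟨i₀, hi₀, rfl⟩
              · exact Or.inl ha
              · exact Or.inr ⟨i, hi, rfl⟩
            have hlow : ∀ a ∈ F, a < u i₀ := fun a ha =>
              (hFn a ha).trans_le (hu.monotone (hGn _ hi₀))
            have huL : u i₀ ≤ u L := hu.monotone hi₀L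
            have h2 := h.2.2.1 _ h1 (fun a => if a = u i₀ then u L else a) ?_ ?_
            · refine h.2.1 _ h2 _ fun a ha => ?_
              simp only [Finset.mem_union, Finset.mem_insert, Finset.mem_image,
                Finset.mem_filter] at ha ⊢
              rcases ha with (rfl | ha) | ⟨i, ⟨hi, hi'⟩, rfl⟩
              · exact ⟨u i₀, Or.inl (Or.inl rfl), by simp⟩
              · exact ⟨a, Or.inl (Or.inr ha), if_neg (hlow a ha).ne⟩
              · exact ⟨u i, Or.inr ⟨i, ⟨hi, hi'⟩, rfl⟩,
                  if_neg (huL.trans_lt (hu hi')).ne'⟩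
            · intro a _
              split_ifs with ha
              · exact ha ▸ huL
              · exact le_rfl
            · intro a ha a' ha' haa'
              simp only [Finset.coe_union, Finset.coe_insert, Finset.coe_image, Set.mem_union,
                Set.mem_insert_iff, Set.mem_image, Finset.mem_coe, Finset.mem_filter] at ha ha'
              dsimp only
              split_ifs with h3 h4 h4
              · omega
              · rcases ha' with (h5 | h5) | ⟨i, ⟨hi, hi'⟩, rfl⟩
                · exact absurd h5 h4
                · have := hlow _ h5; omega
                · exact hu hi'
              · omega
              · exact haa'
          rw [hG']
          have h5 := hdG (G.filter (L < ·)) (fun i hi => (Finset.mem_filter.1 hi).2) hmem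
          have h6 := hbG G hGn hG
          linarith
        · push Not at hex
          rw [Finset.sum_eq_zero fun i hi => hbL i (hex i hi)]
          have h7 := hmass G
          have : 0 ≤ ((k : ℝ) + 1) * (ε / 2) := by positivity
          linarith
  obtain ⟨k, hk⟩ := exists_nat_gt (2 / ε)
  have hk0 : (0 : ℝ) < k := lt_trans (by positivity) hk
  obtain ⟨b, hb0, hbn, hbs, hbG⟩ := step k
  refine ⟨(k : ℝ)⁻¹ • b, fun i => mul_nonneg (by positivity) (hb0 i), fun i hi => ?_, ?_,
    fun G _ hG => ?_⟩
  · simp [hbn i (by omega)]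
  · rw [Finsupp.support_smul_eq (inv_ne_zero hk0.ne')]
    simp only [Finsupp.smul_apply, smul_eq_mul, ← Finset.mul_sum, hbs]
    exact inv_mul_cancel₀ hk0.ne'
  · simp only [Finsupp.smul_apply, smul_eq_mul, ← Finset.mul_sum]
    have h1 : ∑ i ∈ G, b i = ∑ i ∈ G.filter (n ≤ ·), b i := by
      rw [Finset.sum_filter]
      refine Finset.sum_congr rfl fun i _ => ?_
      split_ifs with hi
      · rfl
      · exact hbn i (by omega)
    have h2 := hbG (G.filter (n ≤ ·)) (fun i hi => (Finset.mem_filter.1 hi).2)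
      (h.2.1 _ hG _ (Finset.union_subset_union_right
        (Finset.image_subset_image (Finset.filter_subset _ _))))
    rw [← h1] at h2
    rw [inv_mul_le_iff₀ hk0]
    rw [div_lt_iff₀ hε] at hk
    linarith

/-- Pták's theorem for regular families: there are convex combinations with small mass on
every member of the family. -/
lemma IsRegularFamily.exists_small_mass {𝒜 : Set (Finset ℕ)} (h : IsRegularFamily 𝒜)
    {u : ℕ → ℕ} (hu : StrictMono u) {ε : ℝ} (hε : 0 < ε) :
    ∃ b : ℕ →₀ ℝ, (∀ i, 0 ≤ b i) ∧ ∑ i ∈ b.support, b i = 1 ∧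
      ∀ G : Finset ℕ, G.image u ∈ 𝒜 → ∑ i ∈ G, b i ≤ ε := by
  obtain ⟨b, hb0, _, hbs, hbG⟩ := h.exists_small_mass_aux hu ∅ ε hε 0
  exact ⟨b, hb0, hbs, fun G hG => hbG G (fun _ _ => Nat.zero_le _) (by simpa using hG)⟩

end Ptak

section TsirelsonNorm

variable {𝒜 : Set (Finset ℕ)} {c : ℝ}

lemma abs_apply_le_sum (x : ℕ →₀ ℝ) (i : ℕ) : |x i| ≤ ∑ i ∈ x.support, |x i| := by
  by_cases hi : i ∈ x.support
  · exact Finset.single_le_sum (f := fun i => |x i|) (fun _ _ => abs_nonneg _) hi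
  · rw [Finsupp.notMem_support_iff.1 hi]
    simpa using Finset.sum_nonneg fun i _ => abs_nonneg (x i)

lemma bddAbove_range_abs (x : ℕ →₀ ℝ) : BddAbove (Set.range fun i => |x i|) :=
  ⟨∑ i ∈ x.support, |x i|, by rintro _ ⟨i, rfl⟩; exact abs_apply_le_sum x i⟩

lemma iSup_abs_nonneg (x : ℕ →₀ ℝ) : 0 ≤ ⨆ i, |x i| := Real.iSup_nonneg fun _ => abs_nonneg _

lemma iSup_abs_le_sum (x : ℕ →₀ ℝ) : ⨆ i, |x i| ≤ ∑ i ∈ x.support, |x i| :=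
  ciSup_le (abs_apply_le_sum x)

lemma tsAux_nonneg (k : ℕ) (x : ℕ →₀ ℝ) : 0 ≤ tsAux 𝒜 c k x := by
  cases k with
  | zero => exact iSup_abs_nonneg x
  | succ k => exact (iSup_abs_nonneg x).trans (le_max_left _ _)

lemma AdmissibleSets.sum_filter_abs_le (p : AdmissibleSets 𝒜) (x : ℕ →₀ ℝ) :
    ∑ j ∈ Finset.range p.len, ∑ i ∈ (x.filter (· ∈ p.A j)).support, |x.filter (· ∈ p.A j) i| ≤
      ∑ i ∈ x.support, |x i| := by
  classical
  have h1 : ∀ j, ∑ i ∈ (x.filter (· ∈ p.A j)).support, |x.filter (· ∈ p.A j) i| =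
      ∑ i ∈ x.support.filter (· ∈ p.A j), |x i| := by
    intro j
    rw [Finsupp.support_filter]
    refine Finset.sum_congr rfl fun i hi => ?_
    rw [Finsupp.filter_apply_pos _ _ (Finset.mem_filter.1 hi).2]
  simp only [h1]
  rw [← Finset.sum_biUnion]
  · refine Finset.sum_le_sum_of_subset_of_nonneg (fun i hi => ?_) fun _ _ _ => abs_nonneg _
    obtain ⟨j, _, hj⟩ := Finset.mem_biUnion.1 hi
    exact (Finset.mem_filter.1 hj).1
  · intro j hj j' hj' hne
    rw [Function.onFun, Finset.disjoint_left]
    intro i hi hi'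
    have hij := (Finset.mem_filter.1 hi).2
    have hij' := (Finset.mem_filter.1 hi').2
    have hjl : j < p.len := by simpa using hj
    have hjl' : j' < p.len := by simpa using hj'
    rcases lt_or_gt_of_ne hne with hlt | hlt
    · exact lt_irrefl _ (p.ordered j j' hlt hjl' i hij i hij')
    · exact lt_irrefl _ (p.ordered j' j hlt hjl i hij' i hij)

lemma tsAux_le_sum (hc0 : 0 < c) (hc1 : c < 1) (k : ℕ) (x : ℕ →₀ ℝ) :
    tsAux 𝒜 c k x ≤ ∑ i ∈ x.support, |x i| := by
  induction k generalizing x with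
  | zero => exact iSup_abs_le_sum x
  | succ k ih =>
    have hnn : 0 ≤ ∑ i ∈ x.support, |x i| := Finset.sum_nonneg fun _ _ => abs_nonneg _
    refine max_le (iSup_abs_le_sum x) (Real.iSup_le (fun p => ?_) hnn)
    have h1 := (Finset.sum_le_sum fun j (_ : j ∈ Finset.range p.len) =>
      ih (x.filter (· ∈ p.A j))).trans (p.sum_filter_abs_le x)
    nlinarith

lemma le_tsAux_succ (hc0 : 0 < c) (hc1 : c < 1) (k : ℕ) (x : ℕ →₀ ℝ) (p : AdmissibleSets 𝒜) :
    c * ∑ i ∈ Finset.range p.len, tsAux 𝒜 c k (x.filter (· ∈ p.A i)) ≤ tsAux 𝒜 c (k + 1) x := by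
  refine le_trans ?_ (le_max_right _ _)
  refine le_ciSup (f := fun p : AdmissibleSets 𝒜 =>
    c * ∑ i ∈ Finset.range p.len, tsAux 𝒜 c k (x.filter (· ∈ p.A i))) ?_ p
  refine ⟨∑ i ∈ x.support, |x i|, ?_⟩
  rintro _ ⟨p, rfl⟩
  have hnn : 0 ≤ ∑ i ∈ x.support, |x i| := Finset.sum_nonneg fun _ _ => abs_nonneg _
  have h1 := (Finset.sum_le_sum fun j (_ : j ∈ Finset.range p.len) =>
    tsAux_le_sum (𝒜 := 𝒜) hc0 hc1 k (x.filter (· ∈ p.A j))).trans (p.sum_filter_abs_le x)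
  dsimp only
  nlinarith

lemma tsAux_le_tsirelsonNorm (hc0 : 0 < c) (hc1 : c < 1) (k : ℕ) (x : ℕ →₀ ℝ) :
    tsAux 𝒜 c k x ≤ tsirelsonNorm 𝒜 c x :=
  le_ciSup (f := fun k => tsAux 𝒜 c k x)
    ⟨∑ i ∈ x.support, |x i|, by rintro _ ⟨k, rfl⟩; exact tsAux_le_sum hc0 hc1 k x⟩ k

lemma tsAux_mono (hc0 : 0 < c) (hc1 : c < 1) (k : ℕ) {x y : ℕ →₀ ℝ} (hxy : ∀ i, |x i| ≤ |y i|) :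
    tsAux 𝒜 c k x ≤ tsAux 𝒜 c k y := by
  have hsup : ⨆ i, |x i| ≤ ⨆ i, |y i| := ciSup_mono (bddAbove_range_abs y) hxy
  induction k generalizing x y with
  | zero => exact hsup
  | succ k ih =>
    refine max_le (hsup.trans (le_max_left _ _)) (Real.iSup_le (fun p => ?_) (tsAux_nonneg _ _))
    refine le_trans ?_ (le_tsAux_succ hc0 hc1 k y p)
    refine mul_le_mul_of_nonneg_left (Finset.sum_le_sum fun j _ => ?_) hc0.le
    have hf : ∀ i, |x.filter (· ∈ p.A j) i| ≤ |y.filter (· ∈ p.A j) i| := by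
      intro i
      simp only [Finsupp.filter_apply]
      split_ifs
      · exact hxy i
      · exact le_rfl
    exact ih hf (ciSup_mono (bddAbove_range_abs _) hf)

lemma tsAux_filter_le (hc0 : 0 < c) (hc1 : c < 1) (k : ℕ) (x : ℕ →₀ ℝ) (p : ℕ → Prop)
    [DecidablePred p] : tsAux 𝒜 c k (x.filter p) ≤ tsAux 𝒜 c k x := by
  refine tsAux_mono hc0 hc1 k fun i => ?_
  rw [Finsupp.filter_apply]
  split_ifs <;> simp

lemma tsAux_zero (hc0 : 0 < c) (hc1 : c < 1) (k : ℕ) : tsAux 𝒜 c k 0 = 0 :=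
  le_antisymm (by simpa using tsAux_le_sum (𝒜 := 𝒜) hc0 hc1 k 0) (tsAux_nonneg _ _)

lemma tsAux_add_le (hc0 : 0 < c) (hc1 : c < 1) (k : ℕ) (x y : ℕ →₀ ℝ) :
    tsAux 𝒜 c k (x + y) ≤ tsAux 𝒜 c k x + tsAux 𝒜 c k y := by
  have hsup : ∀ x y : ℕ →₀ ℝ, ⨆ i, |(x + y) i| ≤ (⨆ i, |x i|) + ⨆ i, |y i| := fun x y =>
    ciSup_le fun i => (abs_add_le _ _).trans
      (add_le_add (le_ciSup (bddAbove_range_abs x) i) (le_ciSup (bddAbove_range_abs y) i))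
  induction k generalizing x y with
  | zero => exact hsup x y
  | succ k ih =>
    refine max_le ((hsup x y).trans (add_le_add (le_max_left _ _) (le_max_left _ _)))
      (Real.iSup_le (fun p => ?_) (add_nonneg (tsAux_nonneg _ _) (tsAux_nonneg _ _)))
    refine le_trans ?_ (add_le_add (le_tsAux_succ hc0 hc1 k x p) (le_tsAux_succ hc0 hc1 k y p))
    rw [← mul_add, ← Finset.sum_add_distrib]
    refine mul_le_mul_of_nonneg_left (Finset.sum_le_sum fun j _ => ?_) hc0.le
    rw [Finsupp.filter_add]
    exact ih _ _

lemma tsAux_smul_le (hc0 : 0 < c) (hc1 : c < 1) (k : ℕ) {r : ℝ} (hr : 0 ≤ r) (x : ℕ →₀ ℝ) :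
    tsAux 𝒜 c k (r • x) ≤ r * tsAux 𝒜 c k x := by
  have hsup : ∀ x : ℕ →₀ ℝ, ⨆ i, |(r • x) i| ≤ r * ⨆ i, |x i| := fun x =>
    ciSup_le fun i => by
      rw [Finsupp.smul_apply, smul_eq_mul, abs_mul, abs_of_nonneg hr]
      exact mul_le_mul_of_nonneg_left (le_ciSup (bddAbove_range_abs x) i) hr
  induction k generalizing x with
  | zero => exact hsup x
  | succ k ih =>
    refine max_le ((hsup x).trans (mul_le_mul_of_nonneg_left (le_max_left _ _) hr))
      (Real.iSup_le (fun p => ?_) (mul_nonneg hr (tsAux_nonneg _ _)))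
    refine le_trans ?_ (mul_le_mul_of_nonneg_left (le_tsAux_succ hc0 hc1 k x p) hr)
    rw [mul_left_comm, Finset.mul_sum (a := r)]
    refine mul_le_mul_of_nonneg_left (Finset.sum_le_sum fun j _ => ?_) hc0.le
    rw [Finsupp.filter_smul]
    exact ih _

lemma tsAux_sum_smul_le (hc0 : 0 < c) (hc1 : c < 1) (k : ℕ) (I : Finset ℕ) {b : ℕ → ℝ}
    (hb : ∀ i, 0 ≤ b i) (x : ℕ → ℕ →₀ ℝ) :
    tsAux 𝒜 c k (∑ i ∈ I, b i • x i) ≤ ∑ i ∈ I, b i * tsAux 𝒜 c k (x i) := by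
  classical
  induction I using Finset.induction_on with
  | empty => simp [tsAux_zero hc0 hc1]
  | insert i I hi ih =>
    rw [Finset.sum_insert hi, Finset.sum_insert hi]
    exact (tsAux_add_le hc0 hc1 k _ _).trans (add_le_add (tsAux_smul_le hc0 hc1 k (hb i) _) ih)

end TsirelsonNorm

section Averages

variable {𝒜 : Set (Finset ℕ)} {c : ℝ}

/-- A vector met by at most one set of an admissible sequence gains the factor `c`. -/
lemma admissible_sum_le_of_not_split (hc0 : 0 < c) (hc1 : c < 1) (k : ℕ) (x : ℕ →₀ ℝ)
    (p : AdmissibleSets 𝒜)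
    (hx : ¬ ∃ j j', j < j' ∧ j' < p.len ∧ (∃ a ∈ p.A j, x a ≠ 0) ∧ ∃ a ∈ p.A j', x a ≠ 0) :
    ∑ j ∈ Finset.range p.len, tsAux 𝒜 c k (x.filter (· ∈ p.A j)) ≤ tsirelsonNorm 𝒜 c x := by
  have hzero : ∀ j, (¬ ∃ a ∈ p.A j, x a ≠ 0) → tsAux 𝒜 c k (x.filter (· ∈ p.A j)) = 0 := by
    intro j hj
    have : x.filter (· ∈ p.A j) = 0 := by
      ext a
      rw [Finsupp.filter_apply]
      split_ifs with ha
      · by_contra hne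
        exact hj ⟨a, ha, hne⟩
      · rfl
    rw [this, tsAux_zero hc0 hc1]
  by_cases hex : ∃ j < p.len, ∃ a ∈ p.A j, x a ≠ 0
  · obtain ⟨j, hj, hja⟩ := hex
    rw [Finset.sum_eq_single j]
    · exact (tsAux_filter_le hc0 hc1 k x _).trans (tsAux_le_tsirelsonNorm hc0 hc1 k x)
    · intro j' hj' hne
      refine hzero j' fun hja' => hx ?_
      rcases lt_or_gt_of_ne hne with hlt | hlt
      · exact ⟨j', j, hlt, hj, hja', hja⟩
      · exact ⟨j, j', hlt, Finset.mem_range.1 hj', hja, hja'⟩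
    · intro hj'
      exact absurd (Finset.mem_range.2 hj) hj'
  · rw [Finset.sum_eq_zero]
    · exact (tsAux_nonneg k x).trans (tsAux_le_tsirelsonNorm hc0 hc1 k x)
    · intro j hj
      exact hzero j fun hja => hex ⟨j, Finset.mem_range.1 hj, hja⟩

/-- Averaging successive vectors of norm at most `t` against weights which are small on the
family `𝒜` yields a vector of norm essentially at most `c * t`. -/
lemma tsirelsonNorm_average_le (hreg : IsRegularFamily 𝒜) (hc0 : 0 < c) (hc1 : c < 1)
    {x : ℕ → ℕ →₀ ℝ} {v u : ℕ → ℕ} (hx1 : ∀ i a, |x i a| ≤ 1)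
    (hsupp : ∀ i a, x i a ≠ 0 → v i ≤ a ∧ a ≤ u i) (hvu : ∀ i, v i ≤ u i)
    (huv : ∀ i i', i < i' → u i < v i') {t : ℝ} (ht0 : 0 ≤ t)
    (ht : ∀ i, tsirelsonNorm 𝒜 c (x i) ≤ t) {b : ℕ →₀ ℝ} (hb0 : ∀ i, 0 ≤ b i)
    (hb1 : ∑ i ∈ b.support, b i = 1) {η : ℝ} (hη : 0 ≤ η)
    (hbG : ∀ G : Finset ℕ, G.image u ∈ 𝒜 → ∑ i ∈ G, b i ≤ η) :
    tsirelsonNorm 𝒜 c (∑ i ∈ b.support, b i • x i) ≤ max η ((c + η) * t) := by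
  classical
  have hu : StrictMono u := fun i i' h => (huv i i' h).trans_le (hvu i')
  have hbη : ∀ i, b i ≤ η := fun i => by
    simpa using hbG {i} (by simpa using hreg.1 (u i))
  have hsup : ⨆ a, |(∑ i ∈ b.support, b i • x i) a| ≤ η := by
    refine ciSup_le fun a => ?_
    simp only [Finsupp.finsetSum_apply, Finsupp.smul_apply, smul_eq_mul]
    by_cases hex : ∃ i, x i a ≠ 0
    · obtain ⟨i, hi⟩ := hex
      have hz : ∀ i', i' ≠ i → x i' a = 0 := by
        intro i' hne
        by_contra hi'
        have h1 := hsupp i a hi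
        have h2 := hsupp i' a hi'
        rcases lt_or_gt_of_ne hne with hlt | hlt
        · have := huv _ _ hlt; omega
        · have := huv _ _ hlt; omega
      rw [Finset.sum_eq_single i (fun i' _ hne => by rw [hz i' hne, mul_zero])
        (fun h => by rw [Finsupp.notMem_support_iff.1 h, zero_mul]), abs_mul,
        abs_of_nonneg (hb0 i)]
      exact (mul_le_of_le_one_right (hb0 i) (hx1 i a)).trans (hbη i)
    · push Not at hex
      simpa [hex] using hη
  refine ciSup_le fun k => ?_
  cases k with
  | zero => exact hsup.trans (le_max_left _ _)
  | succ k =>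
    refine max_le (hsup.trans (le_max_left _ _))
      (Real.iSup_le (fun p => ?_) (hη.trans (le_max_left _ _)))
    refine le_trans ?_ (le_max_right _ _)
    set τ : ℕ → ℝ := fun i =>
      c * ∑ j ∈ Finset.range p.len, tsAux 𝒜 c k ((x i).filter (· ∈ p.A j)) with hτ
    have hτt : ∀ i, τ i ≤ t := fun i => (le_tsAux_succ hc0 hc1 k (x i) p).trans
      ((tsAux_le_tsirelsonNorm hc0 hc1 _ _).trans (ht i))
    set split : ℕ → Prop := fun i => ∃ j j', j < j' ∧ j' < p.len ∧
      (∃ a ∈ p.A j, x i a ≠ 0) ∧ ∃ a ∈ p.A j', x i a ≠ 0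
    have hτc : ∀ i, ¬ split i → τ i ≤ c * t := fun i hi =>
      mul_le_mul_of_nonneg_left ((admissible_sum_le_of_not_split hc0 hc1 k (x i) p hi).trans
        (ht i)) hc0.le
    have hbound : c * ∑ j ∈ Finset.range p.len,
        tsAux 𝒜 c k ((∑ i ∈ b.support, b i • x i).filter (· ∈ p.A j)) ≤
        ∑ i ∈ b.support, b i * τ i := by
      calc _ ≤ c * ∑ j ∈ Finset.range p.len, ∑ i ∈ b.support,
              b i * tsAux 𝒜 c k ((x i).filter (· ∈ p.A j)) := by
            refine mul_le_mul_of_nonneg_left (Finset.sum_le_sum fun j _ => ?_) hc0.le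
            have : (∑ i ∈ b.support, b i • x i).filter (· ∈ p.A j) =
                ∑ i ∈ b.support, b i • (x i).filter (· ∈ p.A j) := by
              ext a
              simp only [Finsupp.filter_apply, Finsupp.finsetSum_apply, Finsupp.smul_apply]
              split_ifs <;> simp
            rw [this]
            exact tsAux_sum_smul_le hc0 hc1 k _ hb0 _
        _ = ∑ i ∈ b.support, b i * τ i := by
            rw [Finset.sum_comm, Finset.mul_sum]
            refine Finset.sum_congr rfl fun i _ => ?_
            rw [hτ, ← Finset.mul_sum]
            ring
    have hG : ∑ i ∈ b.support.filter split, b i ≤ η := by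
      refine hbG _ ?_
      obtain ⟨m, hm, hmA⟩ := p.mins
      have hex : ∀ i, ∃ j, split i → j < p.len ∧ v i ≤ m j ∧ m j ≤ u i := by
        intro i
        by_cases hi : split i
        · obtain ⟨j, j', hjj', hj', ⟨a, ha, hxa⟩, a', ha', hxa'⟩ := hi
          refine ⟨j', fun _ => ⟨hj', ?_, ?_⟩⟩
          · exact (hsupp i a hxa).1.trans (p.ordered j j' hjj' hj' a ha _ (hm j' hj').1).le
          · exact ((hm j' hj').2 a' ha').trans (hsupp i a' hxa').2
        · exact ⟨0, fun h => absurd h hi⟩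
      choose J hJ using hex
      have hJ' : ∀ i ∈ b.support.filter split, J i < p.len ∧ v i ≤ m (J i) ∧ m (J i) ≤ u i :=
        fun i hi => hJ i (Finset.mem_filter.1 hi).2
      refine hreg.image_mem_of_le (α := fun i => m (J i)) ?_ (hu.strictMonoOn _)
        (fun i hi => (hJ' i hi).2.2) (hreg.2.1 _ hmA _ ?_)
      · intro i hi i' hi' hlt
        exact (hJ' i hi).2.2.trans_lt ((huv i i' hlt).trans_le (hJ' i' hi').2.1)
      · intro a ha
        obtain ⟨i, hi, rfl⟩ := Finset.mem_image.1 ha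
        exact Finset.mem_image_of_mem _ (Finset.mem_range.2 (hJ' i hi).1)
    have hpt : ∀ i ∈ b.support, b i * τ i ≤ c * t * b i + t * (if split i then b i else 0) := by
      intro i _
      split_ifs with hi
      · have h1 := mul_le_mul_of_nonneg_left (hτt i) (hb0 i)
        have h2 : 0 ≤ c * t * b i := mul_nonneg (mul_nonneg hc0.le ht0) (hb0 i)
        linarith
      · have h1 := mul_le_mul_of_nonneg_left (hτc i hi) (hb0 i)
        linarith
    refine hbound.trans ((Finset.sum_le_sum hpt).trans ?_)
    rw [Finset.sum_add_distrib, ← Finset.mul_sum, ← Finset.mul_sum, hb1, ← Finset.sum_filter]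
    have := mul_le_mul_of_nonneg_left hG ht0
    linarith

/-- Finitely supported probability vectors supported in `M ∩ [N, ∞)`. -/
def tailSimplex (M : Set ℕ) (N : ℕ) : Set (ℕ →₀ ℝ) :=
  {x | (∀ a, 0 ≤ x a) ∧ (x.sum fun _ r => r) = 1 ∧ ∀ a, x a ≠ 0 → a ∈ M ∧ N ≤ a}

lemma exists_tail_average_le (hreg : IsRegularFamily 𝒜) (hc0 : 0 < c) (hc1 : c < 1)
    {M : Set ℕ} {t : ℝ} (ht0 : 0 < t)
    (ht : ∀ N, ∃ x ∈ tailSimplex M N, tsirelsonNorm 𝒜 c x ≤ t) (N : ℕ) :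
    ∃ x ∈ tailSimplex M N, tsirelsonNorm 𝒜 c x ≤ (1 + c) / 2 * t := by
  choose y hy hyt using ht
  let v : ℕ → ℕ := fun i => Nat.rec N (fun _ w => (y w).support.sup id + 1) i
  let u : ℕ → ℕ := fun i => (y (v i)).support.sup id
  have hvs : ∀ i, v (i + 1) = u i + 1 := fun i => rfl
  have hsupp : ∀ i a, y (v i) a ≠ 0 → v i ≤ a ∧ a ≤ u i := fun i a ha =>
    ⟨((hy (v i)).2.2 a ha).2, Finset.le_sup (f := id) (Finsupp.mem_support_iff.2 ha)⟩
  have hvu : ∀ i, v i ≤ u i := by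
    intro i
    have hne : y (v i) ≠ 0 := by
      intro h0
      have := (hy (v i)).2.1
      rw [h0] at this
      simp at this
    obtain ⟨a, ha⟩ := Finsupp.ne_iff.1 hne
    exact (hsupp i a ha).1.trans (hsupp i a ha).2
  have hv : StrictMono v := strictMono_nat_of_lt_succ fun i => by
    rw [hvs]; exact Nat.lt_succ_of_le (hvu i)
  have huv : ∀ i i', i < i' → u i < v i' := fun i i' h =>
    (by rw [hvs]; exact Nat.lt_succ_self _ : u i < v (i + 1)).trans_le (hv.monotone h)
  have hu : StrictMono u := fun i i' h => (huv i i' h).trans_le (hvu i')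
  have hx1 : ∀ i a, |y (v i) a| ≤ 1 := by
    intro i a
    obtain ⟨h0, h1, -⟩ := hy (v i)
    rw [abs_of_nonneg (h0 a), ← h1]
    by_cases ha : a ∈ (y (v i)).support
    · exact Finset.single_le_sum (f := fun a => y (v i) a) (fun a _ => h0 a) ha
    · rw [Finsupp.notMem_support_iff.1 ha]
      exact Finset.sum_nonneg fun a _ => h0 a
  have hη : 0 < min ((1 + c) / 2 * t) ((1 - c) / 2) :=
    lt_min (by positivity) (by linarith)
  obtain ⟨b, hb0, hb1, hbG⟩ := hreg.exists_small_mass hu hη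
  refine ⟨∑ i ∈ b.support, b i • y (v i), ⟨fun a => ?_, ?_, fun a ha => ?_⟩, ?_⟩
  · rw [Finsupp.finsetSum_apply]
    exact Finset.sum_nonneg fun i _ => mul_nonneg (hb0 i) ((hy (v i)).1 a)
  · rw [← Finsupp.sum_finsetSum_index (fun _ => rfl) (fun _ _ _ => rfl)]
    rw [← hb1]
    refine Finset.sum_congr rfl fun i _ => ?_
    rw [Finsupp.sum_smul_index' fun _ => rfl]
    simp only [smul_eq_mul]
    rw [← Finsupp.mul_sum, (hy (v i)).2.1, mul_one]
  · rw [Finsupp.finsetSum_apply] at ha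
    obtain ⟨i, _, hi⟩ := Finset.exists_ne_zero_of_sum_ne_zero ha
    have hya : y (v i) a ≠ 0 := by
      intro h0
      simp [h0] at hi
    have h1 := (hy (v i)).2.2 a hya
    exact ⟨h1.1, (hv.monotone (Nat.zero_le i) : v 0 ≤ v i).trans h1.2⟩
  · refine (tsirelsonNorm_average_le hreg hc0 hc1 (x := fun i => y (v i)) hx1 hsupp hvu huv ht0.le
      (fun i => hyt (v i)) hb0 hb1 hη.le hbG).trans (max_le (min_le_left _ _) ?_)
    refine mul_le_mul_of_nonneg_right ?_ ht0.le
    have := min_le_right ((1 + c) / 2 * t) ((1 - c) / 2)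
    linarith

/-- The unit vector basis of `T_{𝒜,c}` admits convex combinations of arbitrarily small norm
supported in any given infinite set. -/
lemma exists_tailSimplex_tsirelsonNorm_lt (hreg : IsRegularFamily 𝒜) (hc0 : 0 < c) (hc1 : c < 1)
    {M : Set ℕ} (hM : M.Infinite) {ε : ℝ} (hε : 0 < ε) (N : ℕ) :
    ∃ x ∈ tailSimplex M N, tsirelsonNorm 𝒜 c x < ε := by
  have hpow : ∀ k N : ℕ, ∃ x ∈ tailSimplex M N, tsirelsonNorm 𝒜 c x ≤ ((1 + c) / 2) ^ k := by
    intro k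
    induction k with
    | zero =>
      intro N
      obtain ⟨m, hm, hNm⟩ := hM.exists_gt N
      refine ⟨Finsupp.single m 1, ⟨fun a => ?_, by simp, fun a ha => ?_⟩, ?_⟩
      · rw [Finsupp.single_apply]; split_ifs <;> norm_num
      · rw [Finsupp.single_apply_ne_zero] at ha
        exact ⟨ha.1 ▸ hm, ha.1 ▸ hNm.le⟩
      · refine ciSup_le fun k => (tsAux_le_sum hc0 hc1 k _).trans ?_
        simp [Finsupp.support_single]
    | succ k ih =>
      intro N
      rw [pow_succ']
      exact exists_tail_average_le hreg hc0 hc1 (by positivity) ih N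
  obtain ⟨k, hk⟩ := exists_pow_lt_of_lt_one hε (show (1 + c) / 2 < 1 by linarith)
  obtain ⟨x, hx, hxk⟩ := hpow k N
  exact ⟨x, hx, hxk.trans_lt hk⟩

end Averages

lemma FDDOn.SuppExact.smul {X : Type*} [NormedAddCommGroup X] [NormedSpace ℝ X] {F : FDDOn X}
    {x : X} {a b : ℕ} (h : F.SuppExact x a b) {r : ℝ} (hr : r ≠ 0) :
    F.SuppExact (r • x) a b := by
  have hs : F.suppIn (r • x) = F.suppIn x := by
    ext n
    simp [FDDOn.suppIn, hr]
  rw [FDDOn.SuppExact, hs]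
  exact h

lemma FDDOn.IsBlockSeq.lt {X : Type*} [NormedAddCommGroup X] [NormedSpace ℝ X] {F : FDDOn X}
    {z : ℕ → X} {a b : ℕ → ℕ} (h : F.IsBlockSeq z a b) {n n' : ℕ} (hn : n < n') : b n < a n' := by
  have ha : StrictMono a := strictMono_nat_of_lt_succ fun n => (h.1 n).1.trans_lt (h.2 n)
  exact (h.2 n).trans_le (ha.monotone hn)

/-- A functional cannot be bounded below by a positive constant on a normalized block sequence. -/
lemma SubseqTsirelsonUpperEst.not_forall_le {X : Type*} [NormedAddCommGroup X] [NormedSpace ℝ X]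
    {F : FDDOn X} {𝒜 : Set (Finset ℕ)} (hreg : IsRegularFamily 𝒜) {c : ℝ} (hc0 : 0 < c)
    (hc1 : c < 1) {C : ℝ} (hC : 1 ≤ C) (hupper : SubseqTsirelsonUpperEst F 𝒜 c C)
    {z : ℕ → X} {a b : ℕ → ℕ} (hz : F.IsBlockSeq z a b) (hz1 : ∀ n, ‖z n‖ = 1)
    (f : X →L[ℝ] ℝ) {δ : ℝ} (hδ : 0 < δ) : ¬ ∀ n, δ ≤ f (z n) := by
  intro hf
  have ha : StrictMono a := fun n n' h => (hz.1 n).1.trans_lt (hz.lt h)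
  obtain ⟨x, ⟨hx0, hx1, hxM⟩, hxε⟩ := exists_tailSimplex_tsirelsonNorm_lt hreg hc0 hc1
    (Set.infinite_range_of_injective ha.injective)
    (show 0 < δ / ((‖f‖ + 1) * C) by positivity) 0
  set N := x.support.sup id + 1
  have hsub : x.support ⊆ (Finset.range N).image a := by
    intro i hi
    obtain ⟨n, rfl⟩ := (hxM i (Finsupp.mem_support_iff.1 hi)).1
    refine Finset.mem_image_of_mem _ (Finset.mem_range.2 ?_)
    have h1 : a n ≤ x.support.sup id := Finset.le_sup (f := id) hi
    have h2 : n ≤ a n := ha.id_le n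
    omega
  have hxsum : ∑ n ∈ Finset.range N, Finsupp.single (a n) (x (a n)) = x := by
    conv_rhs => rw [← Finsupp.sum_single x]
    rw [Finsupp.sum_of_support_subset x hsub _ (by simp),
      Finset.sum_image fun _ _ _ _ h => ha.injective h]
  have hmass : ∑ n ∈ Finset.range N, x (a n) = 1 := by
    rw [← hx1, Finsupp.sum_of_support_subset x hsub _ (by simp),
      Finset.sum_image fun _ _ _ _ h => ha.injective h]
  have hup := hupper z a b hz hz1 (fun n => x (a n)) N
  rw [hxsum] at hup
  have hlow : δ ≤ ‖f‖ * ‖∑ n ∈ Finset.range N, x (a n) • z n‖ := by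
    refine le_trans ?_ ((le_abs_self _).trans (f.le_opNorm _))
    rw [map_sum]
    calc δ = ∑ n ∈ Finset.range N, x (a n) * δ := by rw [← Finset.sum_mul, hmass, one_mul]
      _ ≤ _ := Finset.sum_le_sum fun n _ => by
        rw [map_smul, smul_eq_mul]
        exact mul_le_mul_of_nonneg_left (hf n) (hx0 _)
  have hC0 : 0 < C := by linarith
  rw [lt_div_iff₀ (by positivity)] at hxε
  have h1 := mul_le_mul_of_nonneg_left hup (norm_nonneg f)
  have h2 : 0 ≤ tsirelsonNorm 𝒜 c x :=
    (tsAux_nonneg 0 x).trans (tsAux_le_tsirelsonNorm hc0 hc1 0 x)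
  nlinarith [mul_nonneg hC0.le h2]

/-- If a Banach space `X` has an FDD satisfying subsequential `T_{𝒜,c}`-upper estimates
for a regular family `𝒜` and some `0 < c < 1`, then the FDD is shrinking. -/
theorem statement_18 (X : Type*) [NormedAddCommGroup X] [NormedSpace ℝ X] [CompleteSpace X]
    (F : FDDOn X) (𝒜 : Set (Finset ℕ)) (hreg : IsRegularFamily 𝒜)
    (c : ℝ) (hc0 : 0 < c) (hc1 : c < 1)
    (C : ℝ) (hC : 1 ≤ C) (hupper : SubseqTsirelsonUpperEst F 𝒜 c C) :
    F.Shrinking := by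
  intro z a b hz hz1 f
  by_contra hlim
  rw [Metric.tendsto_atTop] at hlim
  push Not at hlim
  obtain ⟨δ, hδ, hfreq⟩ := hlim
  obtain ⟨φ, hφ, hφδ⟩ := Filter.extraction_of_frequently_atTop
    (Filter.frequently_atTop.2 fun N => hfreq N)
  simp only [Real.dist_eq, sub_zero] at hφδ
  have hne : ∀ n, f (z (φ n)) ≠ 0 := fun n h0 => by
    have := hφδ n
    rw [h0, abs_zero] at this
    linarith
  have hsign : ∀ r : ℝ, r ≠ 0 → |(SignType.sign r : ℝ)| = 1 ∧ SignType.sign r * r = |r| := by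
    intro r hr
    refine ⟨?_, sign_mul_self r⟩
    rcases lt_or_gt_of_ne hr with h | h
    · simp [sign_neg h]
    · simp [sign_pos h]
  refine hupper.not_forall_le hreg hc0 hc1 hC
    (z := fun n => (SignType.sign (f (z (φ n))) : ℝ) • z (φ n)) (a := a ∘ φ) (b := b ∘ φ)
    ⟨fun n => (hz.1 (φ n)).smul fun h0 => ?_, fun n => hz.lt (hφ (Nat.lt_succ_self n))⟩
    (fun n => ?_) f hδ fun n => ?_
  · have := (hsign _ (hne n)).1
    rw [h0] at this
    simp at this
  · rw [norm_smul, Real.norm_eq_abs, (hsign _ (hne n)).1, hz1, one_mul]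
  · rw [map_smul, smul_eq_mul, (hsign _ (hne n)).2]
    exact hφδ n
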